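/- Let E be a complex Hilbert space, H a bounded self-adjoint operator on E, and ψ₀ ∈ E. For all real s and t, the pairs (H, ψ(t)) and (H, ψ(s)) are unitarily isomorphic in the sense of HSF′: there exists a unitary operator U on E (U† ∘ U = 1 and U ∘ U† = 1) with U ∘ H ∘ U† = H and U ψ(s) = ψ(t), where ψ(r) := exp((-r • Complex.I) • H) ψ₀. -/

import Mathlib

open NormedSpace ContinuousLinearMap

/-- Theorem 1 of the paper: for any two times `s` and `t`, the HSF′ triples `(ℋ, H, ψ(t))` and
`(ℋ, H, ψ(s))` are isomorphic — there is a unitary `U` with `U ∘ H ∘ U† = H` and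
`U ψ(s) = ψ(t)`, where `ψ(r) = exp(-i r H) ψ₀`. -/
theorem hsf_triples_at_different_times_isomorphic {E : Type*} [NormedAddCommGroup E]
    [InnerProductSpace ℂ E] [CompleteSpace E] (H : E →L[ℂ] E) (hH : IsSelfAdjoint H)
    (ψ₀ : E) (s t : ℝ) :
    ∃ U : E →L[ℂ] E, (adjoint U) ∘L U = 1 ∧ U ∘L (adjoint U) = 1 ∧
      U ∘L H ∘L (adjoint U) = H ∧
      U ((exp ((-s • Complex.I) • H)) ψ₀) = (exp ((-t • Complex.I) • H)) ψ₀ := by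
  let +nondep : NormedAlgebra ℚ (E →L[ℂ] E) := .restrictScalars ℚ ℂ (E →L[ℂ] E)
  have hU : exp ((-(t - s) • Complex.I) • H) ∈ unitary (E →L[ℂ] E) := by
    apply exp_mem_unitary_of_mem_skewAdjoint
    apply hH.smul_mem_skewAdjoint
    rw [skewAdjoint.mem_iff]
    simp
  have hc : Commute (exp ((-(t - s) • Complex.I) • H)) H :=
    ((Commute.refl H).smul_left _).exp_left
  obtain ⟨h1, h2⟩ := Unitary.mem_iff.mp hU
  refine ⟨exp ((-(t - s) • Complex.I) • H), h1, h2, ?_, ?_⟩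
  · change exp ((-(t - s) • Complex.I) • H) * (H * star (exp ((-(t - s) • Complex.I) • H))) = H
    rw [← mul_assoc, hc.eq, mul_assoc, h2, mul_one]
  · rw [← ContinuousLinearMap.mul_apply, ← exp_add_of_commute
      (((Commute.refl H).smul_left _).smul_right _), ← add_smul, ← add_smul]
    congr 5
    ring
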